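/- (Garaev.) Let f be an almost embedding of K₅ − 45 (the complete graph on {1,…,5} with the edge {4,5} removed) in the plane. Then w_f(123, 4) − w_f(123, 5) = 1 or w_f(123, 4) − w_f(123, 5) = −1, where w_f(123, l) := w'(p₁₂, f_l) + w'(p₂₃, f_l) + w'(p₃₁, f_l). -/

import Mathlib

/-- Sum of the oriented angles ∠A₁OA₂ + ∠A₂OA₃ + ⋯ + ∠A_{m−1}OA_m at `O`
along a polygonal line given as a list of points in the plane `ℂ`,
where ∠AOB := Complex.arg ((B − O)/(A − O)) ∈ (−π, π]. -/
noncomputable def angSum (O : ℂ) : List ℂ → ℝ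
  | a :: b :: rest => Complex.arg ((b - O) / (a - O)) + angSum O (b :: rest)
  | _ => 0

/-- `w'(A₁…A_m, O)`: the (non-closed) winding number of a polygonal line around `O`,
i.e. `(∠A₁OA₂ + ⋯ + ∠A_{m−1}OA_m) / (2π)`. -/
noncomputable def wp (O : ℂ) (l : List ℂ) : ℝ := angSum O l / (2 * Real.pi)

/-- `w(A₁…A_m, O)`: the winding number of the closed polygonal line `A₁…A_m` around `O`,
i.e. `(∠A₁OA₂ + ⋯ + ∠A_{m−1}OA_m + ∠A_mOA₁) / (2π)`. -/
noncomputable def wcl (O : ℂ) (l : List ℂ) : ℝ := wp O (l ++ [l.headI])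

/-- The image of a polygonal line: the union of the segments between consecutive points. -/
def imagePL : List ℂ → Set ℂ
  | [] => ∅
  | [a] => {a}
  | a :: b :: rest => segment ℝ a b ∪ imagePL (b :: rest)

/-- Edges of `K₅ − 45`: all pairs of distinct vertices except `{4,5}`
(vertices `1,…,5` are encoded as `0,…,4 : Fin 5`, so the removed edge is `{3,4}`). -/
def IsEdgeK5m45 (i j : Fin 5) : Prop := i ≠ j ∧ ¬(i = 3 ∧ j = 4) ∧ ¬(i = 4 ∧ j = 3)

/-!
Let `v i` be the vertices of the triangle and `X`, `Y` the two non-adjacent vertices. If two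
polygonal lines are disjoint, then the angles that they sweep, seen from the end points of each
other, satisfy a linear relation. Applied to the side of the triangle opposite to `v i` and to any
line `P i` joining `X` to `Y` within the edges at `v i`, it shows that the difference of the winding
numbers, times `2π`, is a cyclic sum over `i ≠ j` of the angles swept by `P i` seen from `v j`.

If `P i` runs through `v i`, the relations between the edges at `X` and the edges at `Y` show that
this sum is twice a number congruent to `π` modulo `2π`. If instead `P i` leaves the edge `X v i`
shortly before its first intersection with the edge `v i Y`, then the pieces used of the edges at
`X` form a tree disjoint from the edges at `Y`. Up to terms that cancel in the cyclic sum, each of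
the six summands becomes the angle of a fork, whose two lines run along the tree from a common root
before they part for good. Such an angle is at most `π` in absolute value, and less than `π` for a
line that leaves the tree at the root. So the sum is less than `6π` in absolute value, and hence
equal to `2π` or `-2π`.
-/

open Complex Set

/-! ### Oriented angles -/

lemma arg_div_eq_sub_of_re_pos {x y : ℂ} (hx : 0 < x.re) (hy : 0 < y.re) :
    arg (x / y) = arg x - arg y := by
  have hx₀ : x ≠ 0 := by rintro rfl; simp at hx
  have hy₀ : y ≠ 0 := by rintro rfl; simp at hy
  obtain ⟨hx₁, hx₂⟩ := abs_lt.1 (abs_arg_lt_pi_div_two_iff.2 (Or.inl hx))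
  obtain ⟨hy₁, hy₂⟩ := abs_lt.1 (abs_arg_lt_pi_div_two_iff.2 (Or.inl hy))
  have h : ((arg x - arg y : ℝ) : Real.Angle).toReal = arg x - arg y :=
    Real.Angle.toReal_coe_eq_self_iff.2 ⟨by linarith, by linarith⟩
  rw [← h, Real.Angle.coe_sub, ← arg_div_coe_angle hx₀ hy₀, arg_coe_angle_toReal_eq_arg]

/-- All differences `x - y` lie in one open half-plane, on which the argument has a branch that
turns quotients into differences. -/
lemma exists_forall_arg_sub_div_sub_eq {S T : Set ℂ} (hS : Convex ℝ S) (hSc : IsCompact S)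
    (hT : Convex ℝ T) (hTc : IsClosed T) (h : Disjoint S T) :
    ∃ θ : ℂ → ℝ, ∀ x ∈ S, ∀ x' ∈ S, ∀ y ∈ T, ∀ y' ∈ T,
      arg ((x - y) / (x' - y')) = θ (x - y) - θ (x' - y') := by
  obtain ⟨g, s, t, hgs, hst, hgt⟩ := geometric_hahn_banach_compact_closed hS hSc hT hTc h
  set w : ℂ := -(starRingEnd ℂ) ((InnerProductSpace.toDual ℝ ℂ).symm g) with hw
  have re_mul (z : ℂ) : (w * z).re = -g z := by
    rw [hw, neg_mul, neg_re, ← InnerProductSpace.toDual_symm_apply (𝕜 := ℝ), Complex.inner,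
      mul_comm]
  have re_pos {x y : ℂ} (hx : x ∈ S) (hy : y ∈ T) : 0 < (w * (x - y)).re := by
    rw [re_mul, map_sub]
    linarith [hgs x hx, hgt y hy]
  refine ⟨fun z ↦ arg (w * z), fun x hx x' hx' y hy y' hy' ↦ ?_⟩
  have hw₀ : w ≠ 0 := fun hw₀ ↦ by simpa [hw₀] using re_pos hx hy
  rw [← mul_div_mul_left _ _ hw₀, arg_div_eq_sub_of_re_pos (re_pos hx hy) (re_pos hx' hy')]

lemma isCompact_segment {E : Type*} [AddCommGroup E] [Module ℝ E] [TopologicalSpace E]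
    [IsTopologicalAddGroup E] [ContinuousSMul ℝ E] (a b : E) : IsCompact (segment ℝ a b) := by
  rw [← convexHull_pair]
  exact (toFinite {a, b}).isCompact_convexHull (𝕜 := ℝ)

lemma arg_add_arg_eq_of_disjoint_segment {a b c d : ℂ}
    (h : Disjoint (segment ℝ a b) (segment ℝ c d)) :
    arg ((b - c) / (a - c)) + arg ((d - b) / (c - b)) =
      arg ((d - a) / (c - a)) + arg ((b - d) / (a - d)) := by
  obtain ⟨θ, hθ⟩ := exists_forall_arg_sub_div_sub_eq (convex_segment a b) (isCompact_segment a b)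
    (convex_segment c d) (isCompact_segment c d).isClosed h
  have ha := left_mem_segment ℝ a b
  have hb := right_mem_segment ℝ a b
  have hc := left_mem_segment ℝ c d
  have hd := right_mem_segment ℝ c d
  rw [← neg_div_neg_eq (d - b), ← neg_div_neg_eq (d - a)]
  simp only [neg_sub]
  rw [hθ b hb a ha c hc c hc, hθ b hb b hb d hd c hc, hθ a ha a ha d hd c hc,
    hθ b hb a ha d hd d hd]
  ring

lemma exists_forall_arg_sub_div_sub_eq_of_notMem_segment {a b z : ℂ} (hz : z ∉ segment ℝ a b) :
    ∃ θ : ℂ → ℝ, ∀ x ∈ segment ℝ a b, ∀ y ∈ segment ℝ a b,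
      arg ((x - z) / (y - z)) = θ x - θ y := by
  obtain ⟨θ, hθ⟩ := exists_forall_arg_sub_div_sub_eq (convex_segment a b) (isCompact_segment a b)
    (convex_singleton z) isClosed_singleton (disjoint_singleton_right.2 hz)
  exact ⟨fun x ↦ θ (x - z), fun x hx y hy ↦ hθ x hx y hy z rfl z rfl⟩

lemma arg_add_arg_eq_of_mem_segment {a b w z : ℂ} (hz : z ∉ segment ℝ a b)
    (hw : w ∈ segment ℝ a b) :
    arg ((w - z) / (a - z)) + arg ((b - z) / (w - z)) = arg ((b - z) / (a - z)) := by
  obtain ⟨θ, hθ⟩ := exists_forall_arg_sub_div_sub_eq_of_notMem_segment hz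
  have ha := left_mem_segment ℝ a b
  have hb := right_mem_segment ℝ a b
  rw [hθ w hw a ha, hθ b hb w hw, hθ b hb a ha]
  ring

lemma arg_div_rev_of_notMem_segment {a b z : ℂ} (hz : z ∉ segment ℝ a b) :
    arg ((a - z) / (b - z)) = -arg ((b - z) / (a - z)) := by
  obtain ⟨θ, hθ⟩ := exists_forall_arg_sub_div_sub_eq_of_notMem_segment hz
  have ha := left_mem_segment ℝ a b
  have hb := right_mem_segment ℝ a b
  rw [hθ a ha b hb, hθ b hb a ha, neg_sub]

lemma not_sameRay_of_segment_inter_subset {u p r : ℂ} (hp : p ≠ u) (hr : r ≠ u)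
    (h : segment ℝ u p ∩ segment ℝ u r ⊆ {u}) : ¬SameRay ℝ (p - u) (r - u) := by
  intro hray
  rcases wbtw_total_of_sameRay_vsub_left (x := u) (R := ℝ) hray with hw | hw <;>
    rw [← mem_segment_iff_wbtw] at hw
  · exact hp (h ⟨right_mem_segment ℝ u p, hw⟩)
  · exact hr (h ⟨hw, right_mem_segment ℝ u r⟩)

/-- The difference of the oriented angles of the triangle `u p r` at its vertices `r` and `p`.
Modulo `2π` it is the angle at `u` minus `π`. -/
noncomputable def turn (u p r : ℂ) : ℝ := arg ((p - r) / (u - r)) - arg ((r - p) / (u - p))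

lemma abs_turn_lt_pi {u p r : ℂ} (h : ¬SameRay ℝ (p - u) (r - u)) : |turn u p r| < Real.pi := by
  have hp : p - u ≠ 0 := fun hp ↦ h (hp ▸ .zero_left _)
  have hr : r - u ≠ 0 := fun hr ↦ h (hr ▸ .zero_right _)
  have hpr : p - r ≠ 0 := fun hpr ↦ h (sub_eq_zero.1 hpr ▸ .rfl)
  have hangle : 0 < EuclideanGeometry.angle r u p := by
    rw [EuclideanGeometry.angle, vsub_eq_sub, vsub_eq_sub, angle_eq_abs_arg hr hp, abs_pos]
    exact fun h₀ ↦ h (sameRay_iff_arg_div_eq_zero.2 h₀).symm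
  have hsum := EuclideanGeometry.angle_add_angle_add_angle_eq_pi r (sub_ne_zero.1 hp)
  rw [EuclideanGeometry.angle_comm u p r] at hsum
  simp only [EuclideanGeometry.angle, vsub_eq_sub] at hsum hangle
  rw [angle_eq_abs_arg (neg_sub p r ▸ neg_ne_zero.2 hpr) (neg_sub p u ▸ neg_ne_zero.2 hp),
    angle_eq_abs_arg hpr (neg_sub r u ▸ neg_ne_zero.2 hr)] at hsum
  calc |turn u p r| ≤ |arg ((p - r) / (u - r))| + |arg ((r - p) / (u - p))| := abs_sub _ _
    _ < Real.pi := by linarith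

lemma coe_turn {u p r : ℂ} (h : ¬SameRay ℝ (p - u) (r - u)) :
    (turn u p r : Real.Angle) = arg (u - p) - arg (u - r) - Real.pi := by
  have hp : p - u ≠ 0 := fun hp ↦ h (hp ▸ .zero_left _)
  have hr : r - u ≠ 0 := fun hr ↦ h (hr ▸ .zero_right _)
  have hpr : p - r ≠ 0 := fun hpr ↦ h (sub_eq_zero.1 hpr ▸ .rfl)
  rw [turn, Real.Angle.coe_sub, arg_div_coe_angle hpr (neg_sub r u ▸ neg_ne_zero.2 hr),
    ← neg_sub p r, arg_div_coe_angle (neg_ne_zero.2 hpr) (neg_sub p u ▸ neg_ne_zero.2 hp),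
    arg_neg_coe_angle hpr]
  abel

lemma abs_turn_sub_turn_add_turn_le_pi {u p r c : ℂ} (hpr : ¬SameRay ℝ (p - u) (r - u))
    (hpc : ¬SameRay ℝ (p - u) (c - u)) (hrc : ¬SameRay ℝ (r - u) (c - u)) :
    |turn u p r - turn u p c + turn u r c| ≤ Real.pi := by
  have hpr₁ := abs_lt.1 (abs_turn_lt_pi hpr)
  have hpc₁ := abs_lt.1 (abs_turn_lt_pi hpc)
  have hrc₁ := abs_lt.1 (abs_turn_lt_pi hrc)
  have hmod : ((turn u p r - turn u p c + turn u r c : ℝ) : Real.Angle) = (-Real.pi : ℝ) := by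
    rw [Real.Angle.coe_add, Real.Angle.coe_sub, coe_turn hpr, coe_turn hpc, coe_turn hrc,
      Real.Angle.coe_neg]
    abel
  obtain ⟨k, hk⟩ := Real.Angle.angle_eq_iff_two_pi_dvd_sub.1 hmod
  have hk₁ : (-1 : ℝ) < k := by nlinarith [Real.pi_pos]
  have hk₂ : (k : ℝ) < 2 := by nlinarith [Real.pi_pos]
  have hk' : k = 0 ∨ k = 1 := by
    have : -1 < k := by exact_mod_cast hk₁
    have : k < 2 := by exact_mod_cast hk₂
    omega
  rw [abs_le]
  rcases hk' with rfl | rfl <;> push_cast at hk <;> constructor <;> linarith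

/-! ### Polygonal lines -/

/-- The list `L`, read as a polygonal line, joins `a` to `b`. -/
inductive Joins {α : Type*} : List α → α → α → Prop
  | single (a : α) : Joins [a] a a
  | cons (a : α) {b c : α} {L : List α} : Joins (b :: L) b c → Joins (a :: b :: L) a c

namespace Joins

section General

variable {α : Type*} {a b c : α} {L Q : List α}

lemma exists_eq_cons (h : Joins L a b) : ∃ s, L = a :: s := by
  cases h <;> exact ⟨_, rfl⟩

lemma ne_nil (h : Joins L a b) : L ≠ [] := by
  cases h <;> exact List.cons_ne_nil _ _

lemma cons' (h : Joins L b c) (a : α) : Joins (a :: L) a c := by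
  obtain ⟨s, rfl⟩ := h.exists_eq_cons
  exact h.cons a

lemma append (hL : Joins L a b) (hQ : Joins (b :: Q) b c) : Joins (L ++ Q) a c := by
  induction hL with
  | single a => exact hQ
  | cons a _ ih => exact (ih hQ).cons a

lemma concat (hL : Joins L a b) (c : α) : Joins (L ++ [c]) a c :=
  hL.append ((single c).cons b)

lemma reverse (h : Joins L a b) : Joins L.reverse b a := by
  induction h with
  | single a => exact single a
  | cons a _ ih => simpa using ih.concat a

lemma of_headI_of_getLast [Inhabited α] (hL : L ≠ []) (ha : L.headI = a)
    (hb : L.getLast hL = b) : Joins L a b := by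
  induction L generalizing a with
  | nil => exact absurd rfl hL
  | cons x L ih =>
    obtain rfl : x = a := ha
    cases L with
    | nil => exact hb ▸ single x
    | cons y L => exact (ih (L.cons_ne_nil y) rfl hb).cons x

end General

variable {a b c d z : ℂ} {L P Q : List ℂ}

lemma left_mem (h : Joins L a b) : a ∈ imagePL L := by
  cases h with
  | single => rfl
  | cons => exact Or.inl (left_mem_segment ℝ _ _)

lemma right_mem (h : Joins L a b) : b ∈ imagePL L := by
  induction h with
  | single => rfl
  | cons a _ ih => exact Or.inr ih

lemma imagePL_cons (h : Joins L b c) (a : ℂ) : imagePL (a :: L) = segment ℝ a b ∪ imagePL L := by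
  obtain ⟨s, rfl⟩ := h.exists_eq_cons
  rfl

lemma imagePL_append (h : Joins L a b) : imagePL (L ++ Q) = imagePL L ∪ imagePL (b :: Q) := by
  induction h with
  | single a =>
    refine (union_eq_self_of_subset_left (singleton_subset_iff.2 ?_)).symm
    cases Q with
    | nil => rfl
    | cons => exact Or.inl (left_mem_segment ℝ _ _)
  | cons a _ ih => simp only [List.cons_append, imagePL] at ih ⊢; rw [ih, union_assoc]

lemma imagePL_reverse (h : Joins L a b) : imagePL L.reverse = imagePL L := by
  induction h with
  | single => rfl
  | @cons a b c L h ih =>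
    rw [List.reverse_cons, h.reverse.imagePL_append, ih, union_comm]
    simp only [imagePL]
    rw [segment_symm,
      union_eq_self_of_subset_right (singleton_subset_iff.2 (left_mem_segment ℝ a b))]

lemma exists_suffix {x : ℂ} (h : Joins L a b) (hx : x ∈ imagePL L) :
    ∃ Q, Joins Q x b ∧ imagePL Q ⊆ imagePL L := by
  induction h with
  | single a => exact ⟨[a], hx ▸ single a, subset_rfl⟩
  | @cons a b c L h ih =>
    rcases hx with hx | hx
    · exact ⟨x :: b :: L, h.cons x, union_subset_union_left _
        ((convex_segment a b).segment_subset hx (right_mem_segment ℝ a b))⟩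
    · obtain ⟨Q, hQ, hQL⟩ := ih hx
      exact ⟨Q, hQ, hQL.trans subset_union_right⟩

lemma angSum_append (h : Joins L a b) :
    angSum z (L ++ Q) = angSum z L + angSum z (b :: Q) := by
  induction h with
  | single a => simp [angSum]
  | cons a _ ih => simp only [List.cons_append, angSum] at ih ⊢; rw [ih, add_assoc]

lemma angSum_reverse (h : Joins L a b) (hz : z ∉ imagePL L) :
    angSum z L.reverse = -angSum z L := by
  induction h with
  | single => simp [angSum]
  | @cons a b c L h ih =>
    obtain ⟨hab, hL⟩ := not_or.1 hz
    rw [List.reverse_cons, h.reverse.angSum_append, ih hL]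
    simp only [angSum, arg_div_rev_of_notMem_segment hab]
    ring

lemma coe_angSum (h : Joins L a b) (hz : z ∉ imagePL L) :
    (angSum z L : Real.Angle) = arg (b - z) - arg (a - z) := by
  induction h with
  | single => simp [angSum]
  | @cons a b c L _ ih =>
    obtain ⟨hab, hL⟩ := not_or.1 hz
    have ha : a - z ≠ 0 := fun h₀ ↦ hab (sub_eq_zero.1 h₀ ▸ left_mem_segment ℝ _ _)
    have hb : b - z ≠ 0 := fun h₀ ↦ hab (sub_eq_zero.1 h₀ ▸ right_mem_segment ℝ _ _)
    rw [angSum, Real.Angle.coe_add, ih hL, arg_div_coe_angle hb ha]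
    abel

lemma arg_add_angSum_eq_of_disjoint (hQ : Joins Q c d)
    (h : Disjoint (segment ℝ a b) (imagePL Q)) :
    arg ((b - c) / (a - c)) + angSum b Q = angSum a Q + arg ((b - d) / (a - d)) := by
  induction hQ with
  | single => simp [angSum]
  | cons c _ ih =>
    obtain ⟨hseg, hQ⟩ := disjoint_union_right.1 h
    simp only [angSum]
    linarith [ih hQ, arg_add_arg_eq_of_disjoint_segment hseg]

lemma angSum_add_angSum_eq_of_disjoint (hP : Joins P a b) (hQ : Joins Q c d)
    (h : Disjoint (imagePL P) (imagePL Q)) :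
    angSum c P + angSum b Q = angSum a Q + angSum d P := by
  induction hP with
  | single => simp [angSum]
  | cons a _ ih =>
    obtain ⟨hseg, hP⟩ := disjoint_union_left.1 h
    simp only [angSum]
    linarith [ih hP, hQ.arg_add_angSum_eq_of_disjoint hseg]

end Joins

lemma isClosed_imagePL (L : List ℂ) : IsClosed (imagePL L) := by
  induction L with
  | nil => exact isClosed_empty
  | cons a L ih =>
    cases L with
    | nil => exact isClosed_singleton
    | cons b L => exact (isCompact_segment a b).isClosed.union ih

lemma angSum_cons_cons_of_mem_segment {u v w z : ℂ} (s : List ℂ) (hw : w ∈ segment ℝ u v)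
    (hz : z ∈ segment ℝ u v → z = u) : angSum z (u :: w :: v :: s) = angSum z (u :: v :: s) := by
  have harg : arg ((w - z) / (u - z)) + arg ((v - z) / (w - z)) = arg ((v - z) / (u - z)) := by
    by_cases hzs : z ∈ segment ℝ u v
    · obtain rfl := hz hzs
      have hray : SameRay ℝ (v - z) (w - z) := (mem_segment_iff_wbtw.1 hw).sameRay_vsub_left.symm
      simp [sameRay_iff_arg_div_eq_zero.1 hray]
    · exact arg_add_arg_eq_of_mem_segment hzs hw
  simp only [angSum]
  rw [← add_assoc, harg]

lemma exists_first_hit_segment {K : Set ℂ} (hK : IsClosed K) {a b : ℂ}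
    (h : (segment ℝ a b ∩ K).Nonempty) :
    ∃ x ∈ segment ℝ a b ∩ K, segment ℝ a x ∩ K ⊆ {x} := by
  obtain ⟨x, hx, hmin⟩ := ((isCompact_segment a b).inter_right hK).exists_isMinOn h
    (f := fun x ↦ dist a x) (by fun_prop)
  refine ⟨x, hx, fun z ⟨hz, hzK⟩ ↦ dist_le_zero.1 ?_⟩
  have hzb := (convex_segment a b).segment_subset (left_mem_segment ℝ a b) hx.1 hz
  linarith [(mem_segment_iff_wbtw.1 hz).dist_add_dist, isMinOn_iff.1 hmin z ⟨hzb, hzK⟩]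

lemma Joins.exists_first_hit {L : List ℂ} {a b : ℂ} {K : Set ℂ} (hL : Joins L a b) (ha : a ∉ K)
    (hb : b ∈ K) (hK : IsClosed K) :
    ∃ Q q x, Joins Q a q ∧ Disjoint (imagePL Q) K ∧ x ∈ K ∧ segment ℝ q x ∩ K ⊆ {x} ∧
      imagePL Q ∪ segment ℝ q x ⊆ imagePL L := by
  induction hL with
  | single => exact absurd hb ha
  | @cons a b c L _ ih =>
    rcases (segment ℝ a b ∩ K).eq_empty_or_nonempty with hempty | hne
    · have hbK : b ∉ K := fun hbK ↦ hempty.subset ⟨right_mem_segment ℝ a b, hbK⟩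
      obtain ⟨Q, q, x, hQ, hQK, hx, hqx, hsub⟩ := ih hbK hb
      obtain ⟨Q, rfl⟩ := hQ.exists_eq_cons
      refine ⟨a :: b :: Q, q, x, hQ.cons a, ?_, hx, hqx, ?_⟩
      · exact disjoint_union_left.2 ⟨disjoint_iff_inter_eq_empty.2 hempty, hQK⟩
      · rw [imagePL, union_assoc]
        exact union_subset_union_right _ hsub
    · obtain ⟨x, ⟨hx, hxK⟩, hax⟩ := exists_first_hit_segment hK hne
      refine ⟨[a], a, x, .single a, disjoint_singleton_left.2 ha, hxK, hax, ?_⟩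
      have hsub := (convex_segment a b).segment_subset (left_mem_segment ℝ a b) hx
      exact union_subset (singleton_subset_iff.2 (Or.inl (left_mem_segment ℝ a b)))
        (hsub.trans subset_union_left)

/-! ### Forks -/

/-- The *fork angle* of two polygonal lines `P` from `o` to `p` and `R` from `o` to `r`: the angle
swept by `P` seen from `r` minus the angle swept by `R` seen from `p`, corrected by the angles that
both lines sweep seen from their common origin `o`. -/
noncomputable def forkAngle (o p r : ℂ) (P R : List ℂ) : ℝ :=
  (angSum r P - angSum p R) - (angSum o P - angSum o R)

lemma forkAngle_swap (o p r : ℂ) (P R : List ℂ) : forkAngle o r p R P = -forkAngle o p r P R := by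
  simp only [forkAngle]
  ring

lemma Joins.forkAngle_append_append {c u p r : ℂ} {L : List ℂ} (hL : Joins L c u)
    (hp : p ∉ imagePL L) (hr : r ∉ imagePL L) (s t : List ℂ) :
    forkAngle c p r (L ++ s) (L ++ t) =
      forkAngle u p r (u :: s) (u :: t) - forkAngle u p c (u :: s) L.reverse +
        forkAngle u r c (u :: t) L.reverse := by
  simp only [forkAngle, hL.angSum_append, hL.angSum_reverse hp, hL.angSum_reverse hr]
  ring

/-- The polygonal line `u :: s` leaves the set `K` at its first point `u`, never to return, and
ends at `p`. -/
structure IsBranch (K : Set ℂ) (u p : ℂ) (s : List ℂ) : Prop where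
  base_mem : u ∈ K
  joins : Joins (u :: s) u p
  ne_nil : s ≠ []
  base_notMem : u ∉ imagePL s
  inter_subset : imagePL (u :: s) ∩ K ⊆ {u}

namespace IsBranch

variable {K K' : Set ℂ} {u v p r c x y : ℂ} {s t L : List ℂ}

lemma joins_tail (h : IsBranch K u p (x :: s)) : Joins (x :: s) x p := by
  cases h.joins with
  | cons _ hj => exact hj

lemma imagePL_subset (h : IsBranch K u p s) : imagePL s ⊆ imagePL (u :: s) := by
  obtain ⟨x, s, rfl⟩ := List.exists_cons_of_ne_nil h.ne_nil
  exact subset_union_right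

lemma disjoint (h : IsBranch K u p s) : Disjoint (imagePL s) K :=
  disjoint_left.2 fun _ hx hK ↦ h.base_notMem (h.inter_subset ⟨h.imagePL_subset hx, hK⟩ ▸ hx)

lemma end_notMem (h : IsBranch K u p s) : p ∉ K := by
  obtain ⟨x, s, rfl⟩ := List.exists_cons_of_ne_nil h.ne_nil
  exact disjoint_left.1 h.disjoint h.joins_tail.right_mem

lemma mono (h : IsBranch K' u p s) (hK : K ⊆ K') (hu : u ∈ K) : IsBranch K u p s where
  __ := h
  base_mem := hu
  inter_subset := (inter_subset_inter_right _ hK).trans h.inter_subset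

lemma cons_segment (h : IsBranch K' v p s) (hK : K ∪ segment ℝ u v ⊆ K') (hu : u ∈ K)
    (hv : v ∉ K) (huv : segment ℝ u v ∩ K ⊆ {u}) : IsBranch K u p (v :: s) where
  base_mem := hu
  joins := h.joins.cons u
  ne_nil := List.cons_ne_nil v s
  base_notMem hs := hv (h.inter_subset ⟨hs, hK (Or.inl hu)⟩ ▸ hu)
  inter_subset := by
    rintro x ⟨hx | hx, hxK⟩
    · exact huv ⟨hx, hxK⟩
    · exact absurd (h.inter_subset ⟨hx, hK (Or.inl hxK)⟩ ▸ hxK) hv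

lemma forkAngle_eq_turn (hs : IsBranch K u p (x :: s)) (ht : IsBranch K' u r (y :: t))
    (hst : imagePL (u :: x :: s) ∩ imagePL (u :: y :: t) ⊆ {u}) :
    forkAngle u p r (u :: x :: s) (u :: y :: t) = turn u x y := by
  have hxt : Disjoint (segment ℝ u x) (imagePL (y :: t)) :=
    disjoint_left.2 fun z hz hz' ↦ ht.base_notMem (hst ⟨Or.inl hz, Or.inr hz'⟩ ▸ hz')
  have hys : Disjoint (segment ℝ u y) (imagePL (x :: s)) :=
    disjoint_left.2 fun z hz hz' ↦ hs.base_notMem (hst ⟨Or.inr hz', Or.inl hz⟩ ▸ hz')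
  have hst' : Disjoint (imagePL (x :: s)) (imagePL (y :: t)) :=
    disjoint_left.2 fun z hz hz' ↦ ht.base_notMem (hst ⟨Or.inr hz, Or.inr hz'⟩ ▸ hz')
  have hx := ht.joins_tail.arg_add_angSum_eq_of_disjoint hxt
  have hy := hs.joins_tail.arg_add_angSum_eq_of_disjoint hys
  have hxy := hs.joins_tail.angSum_add_angSum_eq_of_disjoint ht.joins_tail hst'
  simp only [forkAngle, turn, angSum, sub_self, div_zero, arg_zero]
  linarith

lemma not_sameRay (hs : IsBranch K u p (x :: s)) (ht : IsBranch K' u r (y :: t))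
    (hst : imagePL (u :: x :: s) ∩ imagePL (u :: y :: t) ⊆ {u}) :
    ¬SameRay ℝ (x - u) (y - u) :=
  not_sameRay_of_segment_inter_subset
    (fun h ↦ hs.base_notMem (h ▸ hs.joins_tail.left_mem))
    (fun h ↦ ht.base_notMem (h ▸ ht.joins_tail.left_mem))
    ((inter_subset_inter subset_union_left subset_union_left).trans hst)

lemma abs_forkAngle_lt_pi (hs : IsBranch K u p s) (ht : IsBranch K' u r t)
    (hst : imagePL (u :: s) ∩ imagePL (u :: t) ⊆ {u}) :
    |forkAngle u p r (u :: s) (u :: t)| < Real.pi := by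
  obtain ⟨x, s, rfl⟩ := List.exists_cons_of_ne_nil hs.ne_nil
  obtain ⟨y, t, rfl⟩ := List.exists_cons_of_ne_nil ht.ne_nil
  rw [hs.forkAngle_eq_turn ht hst]
  exact abs_turn_lt_pi (hs.not_sameRay ht hst)

lemma abs_forkAngle_append_append_le_pi (hs : IsBranch K u p s) (ht : IsBranch K u r t)
    (hst : imagePL (u :: s) ∩ imagePL (u :: t) ⊆ {u}) (hL : Joins L c v) (hu : u ∉ imagePL L)
    (hLK : imagePL (L ++ [u]) ⊆ K) :
    |forkAngle c p r ((L ++ [u]) ++ s) ((L ++ [u]) ++ t)| ≤ Real.pi := by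
  have hLu := hL.concat u
  have hrev : (L ++ [u]).reverse = u :: L.reverse := by simp
  have hC : IsBranch {u} u c L.reverse := {
    base_mem := rfl
    joins := hrev ▸ hLu.reverse
    ne_nil := hL.reverse.ne_nil
    base_notMem := by rwa [hL.imagePL_reverse]
    inter_subset := inter_subset_right }
  have hCK : imagePL (u :: L.reverse) ⊆ K := by rwa [← hrev, hLu.imagePL_reverse]
  rw [hLu.forkAngle_append_append (fun h ↦ hs.end_notMem (hLK h))
    (fun h ↦ ht.end_notMem (hLK h)), hrev]
  have hsC := (inter_subset_inter_right _ hCK).trans hs.inter_subset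
  have htC := (inter_subset_inter_right _ hCK).trans ht.inter_subset
  obtain ⟨x, s, rfl⟩ := List.exists_cons_of_ne_nil hs.ne_nil
  obtain ⟨y, t, rfl⟩ := List.exists_cons_of_ne_nil ht.ne_nil
  obtain ⟨z, l, hz⟩ := List.exists_cons_of_ne_nil hC.ne_nil
  rw [hz] at hC hsC htC ⊢
  rw [hs.forkAngle_eq_turn ht hst, hs.forkAngle_eq_turn hC hsC, ht.forkAngle_eq_turn hC htC]
  exact abs_turn_sub_turn_add_turn_le_pi (hs.not_sameRay ht hst) (hs.not_sameRay hC hsC)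
    (ht.not_sameRay hC htC)

end IsBranch

/-! ### Trees -/

open Classical in
/-- Extends paths to the points `v` of a tree `K` to paths to the points `v` of a new segment, which
is attached to `K` at `u`. -/
noncomputable def extendPath (K : Set ℂ) (path : ℂ → List ℂ) (u v : ℂ) : List ℂ :=
  if v ∈ K then path v else path u ++ [v]

lemma extendPath_of_mem {K : Set ℂ} {v : ℂ} (hv : v ∈ K) (path : ℂ → List ℂ) (u : ℂ) :
    extendPath K path u v = path v :=
  if_pos hv

lemma extendPath_of_notMem {K : Set ℂ} {v : ℂ} (hv : v ∉ K) (path : ℂ → List ℂ) (u : ℂ) :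
    extendPath K path u v = path u ++ [v] :=
  if_neg hv

/-- `K` is a tree in the plane rooted at `c`, obtained from `{c}` by attaching finitely many
segments that meet the previously built tree only at their base point, and `path v` is the
polygonal line running through the tree from the root to the point `v ∈ K` (a junk value if
`v ∉ K`). -/
inductive IsTree (c : ℂ) : Set ℂ → (ℂ → List ℂ) → Prop
  | root : IsTree c {c} fun _ ↦ [c]
  | attach {K : Set ℂ} {path : ℂ → List ℂ} {u a : ℂ} : IsTree c K path → u ∈ K →
      segment ℝ u a ∩ K ⊆ {u} →
      IsTree c (K ∪ segment ℝ u a) (extendPath K path u)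

lemma segment_subset_of_mem_union {K : Set ℂ} {u a x : ℂ} (hx : x ∈ K ∪ segment ℝ u a)
    (hxK : x ∉ K) : segment ℝ u x ⊆ segment ℝ u a :=
  (convex_segment u a).segment_subset (left_mem_segment ℝ u a) (hx.resolve_left hxK)

lemma mem_segment_or_mem_segment {u a v w : ℂ} (hv : v ∈ segment ℝ u a) (hw : w ∈ segment ℝ u a) :
    v ∈ segment ℝ u w ∨ w ∈ segment ℝ u v := by
  simp only [mem_segment_iff_wbtw] at *
  obtain ⟨r, hr, rfl⟩ := hv
  obtain ⟨s, hs, rfl⟩ := hw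
  exact wbtw_or_wbtw_smul_vadd_of_nonneg u (a -ᵥ u) hr.1 hs.1

lemma eq_of_mem_segment_of_mem_segment {u v w x : ℂ} (hw : w ∈ segment ℝ u v)
    (hx : x ∈ segment ℝ w v) (hx' : x ∈ segment ℝ u w) : x = w := by
  rw [mem_segment_iff_wbtw] at *
  exact (wbtw_swap_right_iff ℝ u).1 ⟨hx', hw.trans_right_left hx⟩

lemma IsBranch.cons_of_mem_segment {K K' : Set ℂ} {u v w p : ℂ} {s : List ℂ}
    (hs : IsBranch K' v p s) (hK' : K ∪ segment ℝ u v ⊆ K') (hu : u ∈ K) (hw : w ∉ K)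
    (hwv : w ∈ segment ℝ u v) (huv : segment ℝ u v ∩ K ⊆ {u}) (hvw : v ≠ w) :
    IsBranch (K ∪ segment ℝ u w) w p (v :: s) := by
  have huw := (convex_segment (𝕜 := ℝ) u v).segment_subset (left_mem_segment ℝ u v) hwv
  have hwv' := (convex_segment (𝕜 := ℝ) u v).segment_subset hwv (right_mem_segment ℝ u v)
  have hwu : w ≠ u := fun hwu ↦ hw (hwu ▸ hu)
  have hv : v ∉ K ∪ segment ℝ u w := by
    rintro (hvK | hv)
    · obtain rfl : v = u := huv ⟨right_mem_segment ℝ u v, hvK⟩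
      exact hwu (by simpa using hwv)
    · exact hvw (eq_of_mem_segment_of_mem_segment hwv (right_mem_segment ℝ w v) hv)
  have hwvK : segment ℝ w v ∩ (K ∪ segment ℝ u w) ⊆ {w} := by
    rintro x ⟨hx, hxK | hxw⟩
    · obtain rfl : x = u := huv ⟨hwv' hx, hxK⟩
      exact eq_of_mem_segment_of_mem_segment hwv hx (left_mem_segment ℝ x w)
    · exact eq_of_mem_segment_of_mem_segment hwv hx hxw
  refine hs.cons_segment (subset_trans ?_ hK') (Or.inr (right_mem_segment ℝ u w)) hv hwvK
  rw [union_assoc]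
  exact union_subset_union_right K (union_subset huw hwv')

lemma IsBranch.exists_of_attach {K : Set ℂ} {path : ℂ → List ℂ} {u a w r : ℂ} {t : List ℂ}
    (ht : IsBranch (K ∪ segment ℝ u a) w r t) (hu : u ∈ K) (hua : segment ℝ u a ∩ K ⊆ {u}) :
    ∃ w' t', IsBranch K w' r t' ∧ extendPath K path u w ++ t = path w' ++ t' ∧
      imagePL (w' :: t') ⊆ (K ∪ segment ℝ u a) ∪ imagePL (w :: t) := by
  by_cases hw : w ∈ K
  · exact ⟨w, t, ht.mono subset_union_left hw, by rw [extendPath_of_mem hw], subset_union_right⟩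
  · have huw := segment_subset_of_mem_union ht.base_mem hw
    refine ⟨u, w :: t, ht.cons_segment (union_subset_union_right K huw) hu hw
      ((inter_subset_inter_left _ huw).trans hua), by simp [extendPath_of_notMem hw], ?_⟩
    exact union_subset_union_left _ (huw.trans subset_union_right)

namespace IsTree

variable {c : ℂ} {K : Set ℂ} {path : ℂ → List ℂ}

lemma root_mem (h : IsTree c K path) : c ∈ K := by
  induction h with
  | root => rfl
  | attach _ _ _ ih => exact Or.inl ih

lemma path_root (h : IsTree c K path) : path c = [c] := by
  induction h with
  | root => rfl
  | attach h _ _ ih => rw [extendPath_of_mem h.root_mem, ih]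

lemma isClosed (h : IsTree c K path) : IsClosed K := by
  induction h with
  | root => exact isClosed_singleton
  | attach _ _ _ ih => exact ih.union (isCompact_segment _ _).isClosed

lemma joins_path (h : IsTree c K path) {v : ℂ} (hv : v ∈ K) : Joins (path v) c v := by
  induction h generalizing v with
  | root => exact hv ▸ .single c
  | @attach K path u a _ hu _ ih =>
    by_cases hvK : v ∈ K
    · exact extendPath_of_mem hvK path u ▸ ih hvK
    · exact extendPath_of_notMem hvK path u ▸ (ih hu).concat v

lemma imagePL_path_subset (h : IsTree c K path) {v : ℂ} (hv : v ∈ K) : imagePL (path v) ⊆ K := by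
  induction h generalizing v with
  | root => exact subset_rfl
  | @attach K path u a h hu _ ih =>
    by_cases hvK : v ∈ K
    · exact extendPath_of_mem hvK path u ▸ (ih hvK).trans subset_union_left
    · have huv := segment_subset_of_mem_union hv hvK
      rw [extendPath_of_notMem hvK, (h.joins_path hu).imagePL_append]
      simp only [imagePL]
      exact union_subset ((ih hu).trans subset_union_left) (union_subset
        (huv.trans subset_union_right) (singleton_subset_iff.2 hv))

lemma exists_attach_segment (h : IsTree c K path) (a : ℂ) {b : ℂ} (hb : b ∈ K) :
    ∃ K' path', IsTree c K' path' ∧ K ⊆ K' ∧ a ∈ K' ∧ K' ⊆ K ∪ segment ℝ a b := by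
  obtain ⟨x, ⟨hx, hxK⟩, hax⟩ := exists_first_hit_segment h.isClosed
    (a := a) ⟨b, right_mem_segment ℝ a b, hb⟩
  rw [segment_symm] at hax
  refine ⟨_, _, h.attach hxK hax, subset_union_left, Or.inr (right_mem_segment ℝ x a),
    union_subset_union_right _ ?_⟩
  exact (convex_segment a b).segment_subset hx (left_mem_segment ℝ a b)

lemma exists_attach (h : IsTree c K path) {L : List ℂ} {a b : ℂ} (hL : Joins L a b) (hb : b ∈ K) :
    ∃ K' path', IsTree c K' path' ∧ K ⊆ K' ∧ a ∈ K' ∧ K' ⊆ K ∪ imagePL L := by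
  induction hL with
  | single => exact ⟨K, path, h, subset_rfl, hb, subset_union_left⟩
  | cons a _ ih =>
    obtain ⟨K₁, path₁, h₁, hK₁, hb₁, hsub₁⟩ := ih hb
    obtain ⟨K₂, path₂, h₂, hK₂, ha₂, hsub₂⟩ := h₁.exists_attach_segment a hb₁
    refine ⟨K₂, path₂, h₂, hK₁.trans hK₂, ha₂, hsub₂.trans (union_subset ?_ ?_)⟩
    · exact hsub₁.trans (union_subset_union_right _ subset_union_right)
    · exact subset_union_left.trans subset_union_right

lemma abs_forkAngle_root_lt_pi (h : IsTree c K path) {w p r : ℂ} {s t : List ℂ}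
    (hs : IsBranch K c p s) (ht : IsBranch K w r t)
    (hst : imagePL (c :: s) ∩ imagePL (w :: t) ⊆ K) :
    |forkAngle c p r (c :: s) (path w ++ t)| < Real.pi := by
  induction h generalizing w t with
  | root =>
    obtain rfl := ht.base_mem
    exact hs.abs_forkAngle_lt_pi ht hst
  | @attach K path u a h hu hua ih =>
    obtain ⟨w', t', ht', heq, hsub⟩ := ht.exists_of_attach (path := path) hu hua
    rw [heq]
    refine ih (hs.mono subset_union_left h.root_mem) ht' fun x ⟨hxs, hxt⟩ ↦ ?_
    have hx : x ∈ K ∪ segment ℝ u a := (hsub hxt).elim id fun hxt ↦ hst ⟨hxs, hxt⟩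
    exact hs.inter_subset ⟨hxs, hx⟩ ▸ h.root_mem

lemma abs_forkAngle_segment_le_pi (h : IsTree c K path) {K' : Set ℂ} {u v w p r : ℂ}
    {s t : List ℂ} (hu : u ∈ K) (hw : w ∉ K) (hwv : w ∈ segment ℝ u v)
    (huv : segment ℝ u v ∩ K ⊆ {u}) (hK' : K ∪ segment ℝ u v ⊆ K') (hs : IsBranch K' v p s)
    (ht : IsBranch K' w r t) (hst : imagePL (v :: s) ∩ imagePL (w :: t) ⊆ K') :
    |forkAngle c p r (path u ++ v :: s) (path u ++ w :: t)| ≤ Real.pi := by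
  have hLu := h.joins_path hu
  have huw := (convex_segment (𝕜 := ℝ) u v).segment_subset (left_mem_segment ℝ u v) hwv
  have hwv' := (convex_segment (𝕜 := ℝ) u v).segment_subset hwv (right_mem_segment ℝ u v)
  have hK'' : K ∪ segment ℝ u w ⊆ K' := (union_subset_union_right K huw).trans hK'
  have hL : imagePL (path u ++ [w]) ⊆ K ∪ segment ℝ u w := by
    rw [hLu.imagePL_append]
    exact union_subset_union (h.imagePL_path_subset hu)
      (union_subset subset_rfl (singleton_subset_iff.2 (right_mem_segment ℝ u w)))
  have hwL : w ∉ imagePL (path u) := fun hwL ↦ hw (h.imagePL_path_subset hu hwL)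
  have hwK'' : w ∈ K ∪ segment ℝ u w := Or.inr (right_mem_segment ℝ u w)
  have ht' := ht.mono hK'' hwK''
  by_cases hvw : v = w
  · subst hvw
    have hvst : imagePL (v :: s) ∩ imagePL (v :: t) ⊆ {v} := fun x hx ↦
      hs.inter_subset ⟨hx.1, hst hx⟩
    simpa using (hs.mono hK'' hwK'').abs_forkAngle_append_append_le_pi ht' hvst hLu hwL hL
  have hwvK' : segment ℝ w v ⊆ K' := (hwv'.trans subset_union_right).trans hK'
  have hs' := hs.cons_of_mem_segment hK' hu hw hwv huv hvw
  have hst' : imagePL (w :: v :: s) ∩ imagePL (w :: t) ⊆ {w} := fun x ⟨hx, hxt⟩ ↦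
    ht.inter_subset ⟨hxt, hx.elim (hwvK' ·) fun hxs ↦ hst ⟨hxs, hxt⟩⟩
  have hsubdiv (z : ℂ) (hz : z ∈ segment ℝ u v → z = u) :
      angSum z (path u ++ v :: s) = angSum z ((path u ++ [w]) ++ v :: s) := by
    rw [List.append_assoc, hLu.angSum_append, hLu.angSum_append, List.singleton_append,
      angSum_cons_cons_of_mem_segment s hwv hz]
  have hr : r ∈ segment ℝ u v → r = u := fun hr ↦ absurd (hK' (Or.inr hr)) ht.end_notMem
  have hfork := hs'.abs_forkAngle_append_append_le_pi ht' hst' hLu hwL hL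
  rw [forkAngle, ← hsubdiv r hr, ← hsubdiv c fun hc ↦ huv ⟨hc, h.root_mem⟩] at hfork
  simpa [forkAngle] using hfork

lemma abs_forkAngle_le_pi (h : IsTree c K path) {v w p r : ℂ} {s t : List ℂ}
    (hs : IsBranch K v p s) (ht : IsBranch K w r t)
    (hst : imagePL (v :: s) ∩ imagePL (w :: t) ⊆ K) :
    |forkAngle c p r (path v ++ s) (path w ++ t)| ≤ Real.pi := by
  induction h generalizing v w p r s t with
  | root =>
    obtain rfl := hs.base_mem
    obtain rfl := ht.base_mem
    exact (hs.abs_forkAngle_lt_pi ht hst).le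
  | @attach K path u a h hu hua ih =>
    have of_left_mem {v w p r : ℂ} {s t : List ℂ} (hs : IsBranch (K ∪ segment ℝ u a) v p s)
        (ht : IsBranch (K ∪ segment ℝ u a) w r t)
        (hst : imagePL (v :: s) ∩ imagePL (w :: t) ⊆ K ∪ segment ℝ u a) (hv : v ∈ K) :
        |forkAngle c p r (extendPath K path u v ++ s) (extendPath K path u w ++ t)| ≤ Real.pi := by
      obtain ⟨w', t', ht', heq, hsub⟩ := ht.exists_of_attach (path := path) hu hua
      rw [heq, extendPath_of_mem hv]
      refine ih (hs.mono subset_union_left hv) ht' fun x ⟨hxs, hxt⟩ ↦ ?_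
      have hx : x ∈ K ∪ segment ℝ u a := (hsub hxt).elim id fun hxt ↦ hst ⟨hxs, hxt⟩
      exact hs.inter_subset ⟨hxs, hx⟩ ▸ hv
    by_cases hv : v ∈ K
    · exact of_left_mem hs ht hst hv
    by_cases hw : w ∈ K
    · rw [← abs_neg, ← forkAngle_swap]
      exact of_left_mem ht hs (inter_comm _ _ ▸ hst) hw
    rw [extendPath_of_notMem hv, extendPath_of_notMem hw, List.append_assoc, List.append_assoc]
    have huv := segment_subset_of_mem_union hs.base_mem hv
    have huw := segment_subset_of_mem_union ht.base_mem hw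
    rcases mem_segment_or_mem_segment (hs.base_mem.resolve_left hv) (ht.base_mem.resolve_left hw)
      with hvw | hwv
    · rw [← abs_neg, ← forkAngle_swap]
      exact h.abs_forkAngle_segment_le_pi hu hv hvw
        ((inter_subset_inter_left _ huw).trans hua) (union_subset_union_right K huw) ht hs
        (inter_comm _ _ ▸ hst)
    · exact h.abs_forkAngle_segment_le_pi hu hw hwv
        ((inter_subset_inter_left _ huv).trans hua) (union_subset_union_right K huv) hs ht hst

end IsTree

lemma exists_isTree_of_forall_joins {ι : Type*} [Finite ι] {X : ℂ} {x : ι → ℂ}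
    {P : ι → List ℂ} (hP : ∀ i, Joins (P i) X (x i)) (i₀ : ι) :
    ∃ K path, IsTree (x i₀) K path ∧ X ∈ K ∧ (∀ i, x i ∈ K) ∧ K ⊆ ⋃ i, imagePL (P i) := by
  have := Fintype.ofFinite ι
  suffices ∀ s : Finset ι, ∃ K path, IsTree (x i₀) K path ∧ X ∈ K ∧ (∀ i ∈ s, x i ∈ K) ∧
      K ⊆ ⋃ i, imagePL (P i) by simpa using this Finset.univ
  intro s
  classical
  induction s using Finset.induction_on with
  | empty =>
    obtain ⟨K, path, h, -, hX, hK⟩ := IsTree.root.exists_attach (hP i₀) rfl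
    refine ⟨K, path, h, hX, by simp,
      hK.trans (union_subset ?_ (subset_iUnion (fun i ↦ imagePL (P i)) i₀))⟩
    exact singleton_subset_iff.2 (mem_iUnion_of_mem i₀ (hP i₀).right_mem)
  | insert i s _ ih =>
    obtain ⟨K, path, h, hX, hs, hK⟩ := ih
    obtain ⟨K', path', h', hKK', hi, hK'⟩ := h.exists_attach (hP i).reverse hX
    rw [(hP i).imagePL_reverse] at hK'
    refine ⟨K', path', h', hKK' hX, ?_,
      hK'.trans (union_subset hK (subset_iUnion (fun i ↦ imagePL (P i)) i))⟩
    exact (Finset.forall_mem_insert _ _ _).2 ⟨hi, fun j hj ↦ hKK' (hs j hj)⟩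

lemma exists_forall_angSum_append_eq {π π' B : ι → List ℂ} {X c₀ Y : ℂ} {c v : ι → ℂ}
    (hπ : ∀ i, Joins (π i) X (c i)) (hπ' : ∀ i, Joins (π' i) c₀ (c i))
    (hB : ∀ j, Joins (B j) (v j) Y) (h : ∀ i j, Disjoint (imagePL (π i)) (imagePL (B j)))
    (h' : ∀ i j, Disjoint (imagePL (π' i)) (imagePL (B j))) (s : ι → List ℂ) :
    ∃ g h : ι → ℝ, ∀ i j,
      angSum (v j) (π i ++ s i) = angSum (v j) (π' i ++ s i) + g i + h j := by
  refine ⟨fun i ↦ angSum Y (π i) - angSum Y (π' i),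
    fun j ↦ angSum X (B j) - angSum c₀ (B j), fun i j ↦ ?_⟩
  have hi := (hπ i).angSum_add_angSum_eq_of_disjoint (hB j) (h i j)
  have hi' := (hπ' i).angSum_add_angSum_eq_of_disjoint (hB j) (h' i j)
  rw [(hπ i).angSum_append, (hπ' i).angSum_append]
  linarith

lemma IsTree.exists_abs_angSum_append_sub_le {ι : Type*} {π s t B : ι → List ℂ} {X Y c₀ : ℂ}
    {c u v : ι → ℂ} {K : Set ℂ} {path : ℂ → List ℂ} (hK : IsTree c₀ K path)
    (hπ : ∀ i, Joins (π i) X (c i)) (hs : ∀ i, IsBranch K (c i) Y (s i))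
    (ht : ∀ j, IsBranch K (u j) (v j) (t j))
    (hst : ∀ i j, i ≠ j → imagePL (c i :: s i) ∩ imagePL (u j :: t j) ⊆ K)
    (hB : ∀ j, Joins (B j) (v j) Y) (hπB : ∀ i j, Disjoint (imagePL (π i)) (imagePL (B j)))
    (hKB : ∀ j, Disjoint K (imagePL (B j))) :
    ∃ g h : ι → ℝ, ∀ i j, i ≠ j → |angSum (v j) (π i ++ s i) - g i - h j| ≤ Real.pi ∧
      (c i = c₀ → |angSum (v j) (π i ++ s i) - g i - h j| < Real.pi) := by
  obtain ⟨g, h, hgh⟩ := exists_forall_angSum_append_eq hπ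
    (fun i ↦ hK.joins_path (hs i).base_mem) hB hπB
    (fun i j ↦ (hKB j).mono_left (hK.imagePL_path_subset (hs i).base_mem)) s
  refine ⟨fun i ↦ g i + angSum c₀ (path (c i) ++ s i),
    fun j ↦ h j + angSum Y (path (u j) ++ t j) - angSum c₀ (path (u j) ++ t j), fun i j hij ↦ ?_⟩
  have hfork : angSum (v j) (π i ++ s i) - (g i + angSum c₀ (path (c i) ++ s i)) -
      (h j + angSum Y (path (u j) ++ t j) - angSum c₀ (path (u j) ++ t j)) =
        forkAngle c₀ Y (v j) (path (c i) ++ s i) (path (u j) ++ t j) := by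
    rw [hgh, forkAngle]
    ring
  rw [hfork]
  refine ⟨hK.abs_forkAngle_le_pi (hs i) (ht j) (hst i j hij), ?_⟩
  rintro rfl
  rw [hK.path_root]
  exact hK.abs_forkAngle_root_lt_pi (hs i) (ht j) (hst i j hij)

/-! ### Crossings -/

lemma Joins.exists_isBranch {K : Set ℂ} {L : List ℂ} {a b : ℂ} (hL : Joins L a b) (ha : a ∈ K)
    (hb : b ∉ K) (hK : IsClosed K) :
    ∃ u t, IsBranch K u b t ∧ imagePL (u :: t) ⊆ imagePL L := by
  obtain ⟨Q, q, x, hQ, hQK, hxK, hqx, hsub⟩ := hL.reverse.exists_first_hit hb ha hK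
  rw [hL.imagePL_reverse, ← hQ.imagePL_reverse] at hsub
  rw [← hQ.imagePL_reverse] at hQK
  have hxQ : imagePL (x :: Q.reverse) = segment ℝ q x ∪ imagePL Q.reverse := by
    rw [hQ.reverse.imagePL_cons, segment_symm]
  refine ⟨x, Q.reverse, ⟨hxK, hQ.reverse.cons' x, hQ.reverse.ne_nil,
    disjoint_right.1 hQK hxK, ?_⟩, hxQ ▸ union_comm _ _ ▸ hsub⟩
  rw [hxQ, union_inter_distrib_right, hQK.inter_eq, union_empty]
  exact hqx

lemma exists_mem_segment_disjoint {F : Set ℂ} {q x : ℂ} (hF : IsClosed F) (hx : x ∉ F)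
    (hqx : q ≠ x) : ∃ c ∈ segment ℝ q x, c ≠ x ∧ Disjoint (segment ℝ c x) F := by
  obtain ⟨ε, hε, hball⟩ := Metric.isOpen_iff.1 hF.isOpen_compl x hx
  obtain ⟨c, hc, hcx⟩ := Metric.mem_closure_iff.1
    (segment_subset_closure_openSegment (right_mem_segment ℝ q x)) ε hε
  refine ⟨c, openSegment_subset_segment ℝ q x hc, ?_, disjoint_left.2 fun z hz ↦ hball ?_⟩
  · rintro rfl
    exact hqx (right_mem_openSegment_iff.1 hc)
  · exact (convex_ball x ε).segment_subset (Metric.mem_ball'.2 hcx) (Metric.mem_ball_self hε) hz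

/-- A way to pass from a polygonal line `A` starting at `X` to a polygonal line `B` ending at `Y`:
follow the trunk `π` inside `A` up to a point `c` shortly before `B` is reached, and then the branch
`c :: s`, which ends inside `B`. The trunk avoids `B`, and the branch avoids `F`. -/
structure IsCrossing (A B : List ℂ) (X Y : ℂ) (F : Set ℂ) (c : ℂ) (π s : List ℂ) : Prop where
  joins : Joins π X c
  subset : imagePL π ⊆ imagePL A
  disjoint : Disjoint (imagePL π) (imagePL B)
  isBranch : IsBranch (imagePL π) c Y s
  branch_subset : imagePL (c :: s) ⊆ imagePL A ∪ imagePL B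
  branch_disjoint : Disjoint (imagePL (c :: s)) F

lemma exists_isCrossing {A B : List ℂ} {X Y v : ℂ} {F : Set ℂ} (hA : Joins A X v)
    (hB : Joins B v Y) (hX : X ∉ imagePL B) (hF : IsClosed F) (hBF : Disjoint (imagePL B) F) :
    ∃ c π s, IsCrossing A B X Y F c π s := by
  obtain ⟨Q, q, x, hQ, hQB, hxB, hqx, hsub⟩ :=
    hA.exists_first_hit hX hB.left_mem (isClosed_imagePL B)
  obtain ⟨T, hT, hTB⟩ := hB.exists_suffix hxB
  have hxQ : x ∉ imagePL Q := disjoint_right.1 hQB hxB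
  obtain ⟨c, hc, hcx, hcF⟩ := exists_mem_segment_disjoint ((isClosed_imagePL Q).union hF)
    (not_or_intro hxQ (disjoint_left.1 hBF hxB)) fun h ↦ hxQ (h ▸ hQ.right_mem)
  rw [disjoint_union_right] at hcF
  have hqc : segment ℝ q c ⊆ segment ℝ q x :=
    (convex_segment q x).segment_subset (left_mem_segment ℝ q x) hc
  have hcx' : segment ℝ c x ⊆ segment ℝ q x :=
    (convex_segment q x).segment_subset hc (right_mem_segment ℝ q x)
  have hqcB : Disjoint (segment ℝ q c) (imagePL B) := disjoint_left.2 fun z hz hzB ↦ by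
    obtain rfl : z = x := hqx ⟨hqc hz, hzB⟩
    exact hcx (eq_of_mem_segment_of_mem_segment hc (right_mem_segment ℝ c z) hz).symm
  have hπ : imagePL (Q ++ [c]) = imagePL Q ∪ segment ℝ q c := by
    rw [hQ.imagePL_append]
    simp [imagePL, right_mem_segment]
  have hcT := hT.imagePL_cons c
  have hπB : Disjoint (imagePL (Q ++ [c])) (imagePL B) := hπ ▸ hQB.union_left hqcB
  refine ⟨c, Q ++ [c], T, hQ.concat c, ?_, hπB, ⟨(hQ.concat c).right_mem, hT.cons' c,
    hT.ne_nil, ?_, ?_⟩, ?_, ?_⟩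
  · exact hπ ▸ (union_subset_union_right _ hqc).trans hsub
  · exact fun h ↦ disjoint_left.1 hπB (hQ.concat c).right_mem (hTB h)
  · rw [hcT]
    rintro z ⟨hz | hz, hzπ⟩
    · refine eq_of_mem_segment_of_mem_segment hc hz ((hπ ▸ hzπ).resolve_left ?_)
      exact disjoint_left.1 hcF.1 hz
    · exact absurd (hTB hz) (disjoint_left.1 hπB hzπ)
  · exact hcT ▸ union_subset_union ((hcx'.trans subset_union_right).trans hsub) hTB
  · exact hcT ▸ hcF.2.union_left (hBF.mono_left hTB)

/-! ### Almost embeddings of `K_{2,ι}` -/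

/-- An almost embedding in the plane of the complete bipartite graph with parts `{X, Y}` and
`{v i | i : ι}`: the edges from `X` are the polygonal lines `A i`, those to `Y` are the `B i`. -/
structure IsAlmostEmbeddingK₂ {ι : Type*} (X Y : ℂ) (v : ι → ℂ) (A B : ι → List ℂ) : Prop where
  joins_left (i : ι) : Joins (A i) X (v i)
  joins_right (i : ι) : Joins (B i) (v i) Y
  disjoint {i j : ι} : i ≠ j → Disjoint (imagePL (A i)) (imagePL (B j))

namespace IsAlmostEmbeddingK₂

variable {ι : Type*} {X Y : ℂ} {v : ι → ℂ} {A B : ι → List ℂ}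

lemma vertex_notMem (H : IsAlmostEmbeddingK₂ X Y v A B) {i j : ι} (hij : i ≠ j) :
    v j ∉ imagePL (A i) :=
  disjoint_right.1 (H.disjoint hij) (H.joins_right j).left_mem

lemma injective (H : IsAlmostEmbeddingK₂ X Y v A B) : Function.Injective v :=
  fun i _ h ↦ by_contra fun hij ↦ H.vertex_notMem hij (h ▸ (H.joins_left i).right_mem)

lemma left_notMem [Nontrivial ι] (H : IsAlmostEmbeddingK₂ X Y v A B) (i : ι) :
    X ∉ imagePL (B i) := by
  obtain ⟨j, hj⟩ := exists_ne i
  exact disjoint_left.1 (H.disjoint hj) (H.joins_left j).left_mem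

lemma exists_isCrossing [Finite ι] [Nontrivial ι] (H : IsAlmostEmbeddingK₂ X Y v A B) (i : ι) :
    ∃ c π s, IsCrossing (A i) (B i) X Y (⋃ j ∈ ({i}ᶜ : Set ι), imagePL (A j)) c π s := by
  refine _root_.exists_isCrossing (H.joins_left i) (H.joins_right i) (H.left_notMem i)
    ((toFinite _).isClosed_biUnion fun j _ ↦ isClosed_imagePL (A j)) ?_
  exact disjoint_iUnion₂_right.2 fun j hj ↦ (H.disjoint hj).symm

lemma exists_joins_abs_angSum_sub_le [Finite ι] [Nontrivial ι]
    (H : IsAlmostEmbeddingK₂ X Y v A B) (i₀ : ι) :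
    ∃ P : ι → List ℂ, (∀ i, Joins (P i) X Y) ∧
      (∀ i, imagePL (P i) ⊆ imagePL (A i) ∪ imagePL (B i)) ∧
      ∃ g h : ι → ℝ, ∀ i j, i ≠ j → |angSum (v j) (P i) - g i - h j| ≤ Real.pi ∧
        (i = i₀ → |angSum (v j) (P i) - g i - h j| < Real.pi) := by
  choose c π s hπ using H.exists_isCrossing
  obtain ⟨K, path, hK, hXK, hcK, hKπ⟩ :=
    exists_isTree_of_forall_joins (fun i ↦ (hπ i).joins) i₀
  have hπB (i j : ι) : Disjoint (imagePL (π i)) (imagePL (B j)) := by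
    obtain rfl | hij := eq_or_ne i j
    · exact (hπ i).disjoint
    · exact (H.disjoint hij).mono_left (hπ i).subset
  have hKB (j : ι) : Disjoint K (imagePL (B j)) :=
    (disjoint_iUnion_left.2 fun i ↦ hπB i j).mono_left hKπ
  have hvK (j : ι) : v j ∉ K := disjoint_right.1 (hKB j) (H.joins_right j).left_mem
  choose u t ht htA using fun j ↦ (H.joins_left j).exists_isBranch hXK (hvK j) hK.isClosed
  have hsA {i j : ι} (hij : i ≠ j) : Disjoint (imagePL (c i :: s i)) (imagePL (A j)) :=
    disjoint_iUnion₂_right.1 (hπ i).branch_disjoint j hij.symm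
  have hs (i : ι) : IsBranch K (c i) Y (s i) := {
    __ := (hπ i).isBranch
    base_mem := hcK i
    inter_subset := fun z ⟨hzs, hzK⟩ ↦ by
      obtain ⟨j, hj⟩ := mem_iUnion.1 (hKπ hzK)
      obtain rfl | hij := eq_or_ne i j
      · exact (hπ i).isBranch.inter_subset ⟨hzs, hj⟩
      · exact absurd ((hπ j).subset hj) (disjoint_left.1 (hsA hij) hzs) }
  obtain ⟨g, h, hgh⟩ := hK.exists_abs_angSum_append_sub_le (fun i ↦ (hπ i).joins) hs ht
    (fun i j hij ↦ ((hsA hij).mono_right (htA j)).le_bot.trans (empty_subset K))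
    H.joins_right hπB hKB
  refine ⟨fun i ↦ π i ++ s i, fun i ↦ (hπ i).joins.append (hπ i).isBranch.joins, fun i ↦ ?_,
    g, h, fun i j hij ↦ ⟨(hgh i j hij).1, fun hi ↦ (hgh i j hij).2 (hi ▸ rfl)⟩⟩
  rw [(hπ i).joins.imagePL_append]
  exact union_subset ((hπ i).subset.trans subset_union_left) (hπ i).branch_subset

end IsAlmostEmbeddingK₂

/-! ### Almost embeddings of `K₅` minus an edge -/

/-- The alternating sum of the off-diagonal entries of `a` in which the entries `a i (i + 1)` are
counted positively and the entries `a i (i + 2)` negatively. -/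
def cyclicSkewSum {G : Type*} [AddCommGroup G] (a : Fin 3 → Fin 3 → G) : G :=
  ∑ i, (a i (i + 1) - a i (i + 2))

section CyclicSkewSum

variable {G : Type*} [AddCommGroup G]

lemma cyclicSkewSum_eq (a : Fin 3 → Fin 3 → G) :
    cyclicSkewSum a = a 0 1 - a 0 2 + (a 1 2 - a 1 0) + (a 2 0 - a 2 1) :=
  Fin.sum_univ_three _

lemma cyclicSkewSum_congr_of_separable {a b : Fin 3 → Fin 3 → G} (g h : Fin 3 → G)
    (hab : ∀ i j, i ≠ j → a i j = b i j + g i + h j) : cyclicSkewSum a = cyclicSkewSum b := by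
  simp only [cyclicSkewSum_eq]
  rw [hab 0 1 (by decide), hab 0 2 (by decide), hab 1 2 (by decide), hab 1 0 (by decide),
    hab 2 0 (by decide), hab 2 1 (by decide)]
  abel

lemma abs_cyclicSkewSum_lt {a : Fin 3 → Fin 3 → ℝ} {C : ℝ}
    (h : ∀ i j, i ≠ j → |a i j| ≤ C ∧ (i = 0 → |a i j| < C)) : |cyclicSkewSum a| < 6 * C := by
  have h₀₁ := abs_lt.1 ((h 0 1 (by decide)).2 rfl)
  have h₀₂ := abs_lt.1 ((h 0 2 (by decide)).2 rfl)
  have h₁₂ := abs_le.1 (h 1 2 (by decide)).1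
  have h₁₀ := abs_le.1 (h 1 0 (by decide)).1
  have h₂₀ := abs_le.1 (h 2 0 (by decide)).1
  have h₂₁ := abs_le.1 (h 2 1 (by decide)).1
  rw [cyclicSkewSum_eq, abs_lt]
  constructor <;> linarith

lemma cyclicSkewSum_coe_arg_sub {v : Fin 3 → ℂ} (hv : Function.Injective v) :
    cyclicSkewSum (fun i j ↦ (arg (v i - v j) : Real.Angle)) = Real.pi := by
  have hswap {i j : Fin 3} (hij : i ≠ j) :
      (arg (v i - v j) : Real.Angle) = arg (v j - v i) + Real.pi := by
    rw [← neg_sub, arg_neg_coe_angle (sub_ne_zero.2 (hv.ne hij.symm))]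
  rw [cyclicSkewSum_eq, hswap (i := 0) (j := 1) (by decide), hswap (i := 1) (j := 2) (by decide),
    hswap (i := 2) (j := 0) (by decide), ← sub_eq_zero]
  calc _ = (Real.pi + Real.pi : Real.Angle) := by abel
    _ = 0 := Real.Angle.coe_pi_add_coe_pi

end CyclicSkewSum

namespace IsAlmostEmbeddingK₂

variable {X Y : ℂ} {v : Fin 3 → ℂ} {A B E : Fin 3 → List ℂ}

lemma coe_cyclicSkewSum_angSum_left (H : IsAlmostEmbeddingK₂ X Y v A B) :
    ((cyclicSkewSum fun i j ↦ angSum (v j) (A i) : ℝ) : Real.Angle) = Real.pi := by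
  calc ((cyclicSkewSum fun i j ↦ angSum (v j) (A i) : ℝ) : Real.Angle)
      = cyclicSkewSum (fun i j ↦ (angSum (v j) (A i) : Real.Angle)) := by
        simp only [cyclicSkewSum_eq, Real.Angle.coe_add, Real.Angle.coe_sub]
    _ = cyclicSkewSum (fun i j ↦ (arg (v i - v j) : Real.Angle)) := by
        refine cyclicSkewSum_congr_of_separable 0 (fun j ↦ -(arg (X - v j) : Real.Angle))
          fun i j hij ↦ ?_
        rw [(H.joins_left i).coe_angSum (H.vertex_notMem hij), Pi.zero_apply, add_zero,
          sub_eq_add_neg]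
    _ = Real.pi := cyclicSkewSum_coe_arg_sub H.injective

lemma cyclicSkewSum_angSum_right (H : IsAlmostEmbeddingK₂ X Y v A B) :
    cyclicSkewSum (fun i j ↦ angSum (v j) (B i)) =
      cyclicSkewSum (fun i j ↦ angSum (v j) (A i)) := by
  calc cyclicSkewSum (fun i j ↦ angSum (v j) (B i))
      = cyclicSkewSum (fun i j ↦ -angSum (v i) (A j)) := by
        refine cyclicSkewSum_congr_of_separable (fun i ↦ angSum X (B i))
          (fun j ↦ angSum Y (A j)) fun i j hij ↦ ?_
        have hAB := (H.joins_left j).angSum_add_angSum_eq_of_disjoint (H.joins_right i)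
          (H.disjoint hij.symm)
        linarith
    _ = cyclicSkewSum (fun i j ↦ angSum (v j) (A i)) := by
        simp only [cyclicSkewSum_eq]
        ring

end IsAlmostEmbeddingK₂

/-- An almost embedding in the plane of `K₅` minus the edge `XY`: an almost embedding of `K_{2,3}`
together with polygonal lines `E i` that join the two vertices other than `v i` of the triangle
`v 0`, `v 1`, `v 2`. -/
structure IsAlmostEmbeddingK₅SubEdge (X Y : ℂ) (v : Fin 3 → ℂ) (A B E : Fin 3 → List ℂ) : Prop
    extends IsAlmostEmbeddingK₂ X Y v A B where
  joins_triangle (i : Fin 3) : Joins (E i) (v (i + 1)) (v (i + 2))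
  disjoint_triangle_left (i : Fin 3) : Disjoint (imagePL (E i)) (imagePL (A i))
  disjoint_triangle_right (i : Fin 3) : Disjoint (imagePL (E i)) (imagePL (B i))

namespace IsAlmostEmbeddingK₅SubEdge

variable {X Y : ℂ} {v : Fin 3 → ℂ} {A B E : Fin 3 → List ℂ}

lemma sum_angSum_sub_angSum_eq_cyclicSkewSum (H : IsAlmostEmbeddingK₅SubEdge X Y v A B E)
    {P : Fin 3 → List ℂ} (hP : ∀ i, Joins (P i) X Y)
    (hPAB : ∀ i, imagePL (P i) ⊆ imagePL (A i) ∪ imagePL (B i)) :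
    ∑ i, (angSum X (E i) - angSum Y (E i)) = cyclicSkewSum fun i j ↦ angSum (v j) (P i) := by
  refine Finset.sum_congr rfl fun i _ ↦ ?_
  have hEP := ((H.disjoint_triangle_left i).union_right (H.disjoint_triangle_right i)).mono_right
    (hPAB i)
  have := (H.joins_triangle i).angSum_add_angSum_eq_of_disjoint (hP i) hEP
  linarith

lemma sum_angSum_sub_angSum_eq_two_mul (H : IsAlmostEmbeddingK₅SubEdge X Y v A B E) :
    ∑ i, (angSum X (E i) - angSum Y (E i)) =
      2 * cyclicSkewSum fun i j ↦ angSum (v j) (A i) := by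
  choose b hb using fun i ↦ (H.joins_right i).exists_eq_cons
  have hbY (i : Fin 3) : Joins (v i :: b i) (v i) Y := hb i ▸ H.joins_right i
  calc _ = cyclicSkewSum fun i j ↦ angSum (v j) (A i ++ b i) := by
        refine H.sum_angSum_sub_angSum_eq_cyclicSkewSum
          (fun i ↦ (H.joins_left i).append (hbY i)) fun i ↦ ?_
        rw [(H.joins_left i).imagePL_append, hb i]
    _ = cyclicSkewSum (fun i j ↦ angSum (v j) (A i)) +
          cyclicSkewSum fun i j ↦ angSum (v j) (B i) := by
        simp only [(H.joins_left _).angSum_append, ← hb, cyclicSkewSum_eq]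
        ring
    _ = _ := by rw [H.cyclicSkewSum_angSum_right, two_mul]

lemma exists_sum_angSum_sub_angSum_eq (H : IsAlmostEmbeddingK₅SubEdge X Y v A B E) :
    ∃ k : ℤ, ∑ i, (angSum X (E i) - angSum Y (E i)) = 2 * Real.pi + 4 * Real.pi * k := by
  obtain ⟨k, hk⟩ := Real.Angle.angle_eq_iff_two_pi_dvd_sub.1 H.coe_cyclicSkewSum_angSum_left
  refine ⟨k, ?_⟩
  rw [H.sum_angSum_sub_angSum_eq_two_mul, sub_eq_iff_eq_add.1 hk]
  ring

lemma abs_sum_angSum_sub_angSum_lt (H : IsAlmostEmbeddingK₅SubEdge X Y v A B E) :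
    |∑ i, (angSum X (E i) - angSum Y (E i))| < 6 * Real.pi := by
  obtain ⟨P, hP, hPAB, g, h, hgh⟩ := H.exists_joins_abs_angSum_sub_le 0
  have hsplit : cyclicSkewSum (fun i j ↦ angSum (v j) (P i)) =
      cyclicSkewSum fun i j ↦ angSum (v j) (P i) - g i - h j :=
    cyclicSkewSum_congr_of_separable g h fun i j _ ↦ by ring
  rw [H.sum_angSum_sub_angSum_eq_cyclicSkewSum hP hPAB, hsplit]
  exact abs_cyclicSkewSum_lt hgh

lemma abs_sum_angSum_sub_angSum_eq (H : IsAlmostEmbeddingK₅SubEdge X Y v A B E) :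
    |∑ i, (angSum X (E i) - angSum Y (E i))| = 2 * Real.pi := by
  obtain ⟨k, hk⟩ := H.exists_sum_angSum_sub_angSum_eq
  have hpi := Real.pi_pos
  have hfactor : 2 * Real.pi + 4 * Real.pi * k = 2 * Real.pi * (1 + 2 * k) := by ring
  have hlt : |(1 + 2 * k : ℝ)| < 3 := by
    have := H.abs_sum_angSum_sub_angSum_lt
    rw [hk, hfactor, abs_mul, abs_of_pos (by positivity)] at this
    nlinarith
  have hone : |1 + 2 * k| = 1 := by
    obtain ⟨h₁, h₂⟩ : -3 < 1 + 2 * k ∧ 1 + 2 * k < 3 := abs_lt.1 (by exact_mod_cast hlt)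
    exact (abs_eq zero_le_one).2 (by omega)
  have hone' : |(1 + 2 * k : ℝ)| = 1 := by exact_mod_cast hone
  rw [hk, hfactor, abs_mul, hone', abs_of_pos (by positivity), mul_one]

lemma abs_sum_wp_sub_wp_eq (H : IsAlmostEmbeddingK₅SubEdge X Y v A B E) :
    |∑ i, (wp X (E i) - wp Y (E i))| = 1 := by
  simp only [wp, ← sub_div, ← Finset.sum_div]
  rw [abs_div, H.abs_sum_angSum_sub_angSum_eq, abs_of_pos Real.two_pi_pos,
    div_self Real.two_pi_pos.ne']

end IsAlmostEmbeddingK₅SubEdge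

instance : DecidableRel IsEdgeK5m45 := fun _ _ ↦
  inferInstanceAs (Decidable (_ ∧ _ ∧ _))

lemma isAlmostEmbeddingK₅SubEdge_of_forall_isEdgeK5m45 {f : Fin 5 → ℂ} {p : Fin 5 → Fin 5 → List ℂ}
    (hjoin : ∀ i j, IsEdgeK5m45 i j → Joins (p i j) (f i) (f j))
    (hdisj : ∀ i j k l : Fin 5, IsEdgeK5m45 i j → IsEdgeK5m45 k l →
      i ≠ k → i ≠ l → j ≠ k → j ≠ l → Disjoint (imagePL (p i j)) (imagePL (p k l))) :
    IsAlmostEmbeddingK₅SubEdge (f 3) (f 4) (fun i ↦ f (i.castLE (by decide)))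
      (fun i ↦ p 3 (i.castLE (by decide))) (fun i ↦ p (i.castLE (by decide)) 4)
      (fun i ↦ p ((i + 1).castLE (by decide)) ((i + 2).castLE (by decide))) where
  joins_left i := hjoin _ _ (by decide +revert)
  joins_right i := hjoin _ _ (by decide +revert)
  joins_triangle i := hjoin _ _ (by decide +revert)
  disjoint {i j} hij := by
    apply hdisj <;> decide +revert
  disjoint_triangle_left i := by
    apply hdisj <;> decide +revert
  disjoint_triangle_right i := by
    apply hdisj <;> decide +revert

/-- Garaev: Let `f` be an almost embedding of `K₅ − 45` in the plane
(five pairwise distinct points, a polygonal line `p i j` joining `f i` to `f j` for each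
edge `{i,j}` with `p j i` the reverse of `p i j`, images of non-adjacent edges disjoint,
and `f l` not on the image of any edge `{i,j}` with `l ∉ {i,j}`). Then
`w_f(123, 4) − w_f(123, 5) = 1` or `w_f(123, 4) − w_f(123, 5) = −1`, where
`w_f(123, l) := w'(p₁₂, f l) + w'(p₂₃, f l) + w'(p₃₁, f l)`
(vertices `1,…,5` are encoded as `0,…,4 : Fin 5`). -/
theorem winding_difference_pm_one_K5_minus_edge (f : Fin 5 → ℂ)
    (p : Fin 5 → Fin 5 → List ℂ)
    (hinj : Function.Injective f)
    (hne : ∀ i j, IsEdgeK5m45 i j → p i j ≠ [])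
    (hjoin : ∀ i j, ∀ h : IsEdgeK5m45 i j,
      (p i j).headI = f i ∧ (p i j).getLast (hne i j h) = f j)
    (hsym : ∀ i j, p j i = (p i j).reverse)
    (hdisj : ∀ i j k l : Fin 5, IsEdgeK5m45 i j → IsEdgeK5m45 k l →
      i ≠ k → i ≠ l → j ≠ k → j ≠ l →
      Disjoint (imagePL (p i j)) (imagePL (p k l)))
    (hvert : ∀ i j l : Fin 5, IsEdgeK5m45 i j → l ≠ i → l ≠ j →
      f l ∉ imagePL (p i j)) :
    (wp (f 3) (p 0 1) + wp (f 3) (p 1 2) + wp (f 3) (p 2 0)) -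
      (wp (f 4) (p 0 1) + wp (f 4) (p 1 2) + wp (f 4) (p 2 0)) = 1 ∨
    (wp (f 3) (p 0 1) + wp (f 3) (p 1 2) + wp (f 3) (p 2 0)) -
      (wp (f 4) (p 0 1) + wp (f 4) (p 1 2) + wp (f 4) (p 2 0)) = -1 := by
  have habs := (isAlmostEmbeddingK₅SubEdge_of_forall_isEdgeK5m45
    (fun i j h ↦ .of_headI_of_getLast (hne i j h) (hjoin i j h).1 (hjoin i j h).2)
    hdisj).abs_sum_wp_sub_wp_eq
  rw [Fin.sum_univ_three] at habs
  rw [← abs_eq zero_le_one, ← habs]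
  congr 1
  change _ = (wp (f 3) (p 1 2) - wp (f 4) (p 1 2)) + (wp (f 3) (p 2 0) - wp (f 4) (p 2 0)) +
    (wp (f 3) (p 0 1) - wp (f 4) (p 0 1))
  ring
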